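/- Explicit computation: let n be even, g = x₁² + ⋯ + xₙ², h = g^ℓ with ℓ ≥ 1, and f = x₁. Then (s + n − 2ℓ) δ_h x₁^s = (Σᵢ ∂/∂xᵢ · xᵢ) · δ_h x₁^s, and for 2 ≤ i ≤ n, j ≥ 1: ∂/∂xᵢ [2(j−ℓ)g^{j−1}x₁² + Σ_{k=2}^n ∂/∂x_k · x_k g^j] · δ_h x₁^s = 2(j−ℓ)(n + 2(j−ℓ) − 1) xᵢ g^{j−1} δ_h x₁^s. Consequently, for n even and ℓ ≥ n/2, b'_{x₁}(h,s) = (s + n − 2ℓ). -/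

import Mathlib

open Polynomial

noncomputable section

set_option maxHeartbeats 1000000
set_option synthInstance.maxHeartbeats 400000

/-- The ring `𝒪` of germs (polynomial model `ℂ[x₁,…,xₙ]`). -/
abbrev OO (n : ℕ) := MvPolynomial (Fin n) ℂ
/-- The fraction field of `𝒪`. -/
abbrev KK (n : ℕ) := FractionRing (OO n)

variable {n : ℕ}

/-- Inclusion `𝒪 → K`. -/
def toK {n : ℕ} (r : OO n) : KK n := algebraMap _ _ r

/-- A family of derivations of `K` extending the partial derivatives `∂/∂xᵢ` of `𝒪`. -/
def ExtendsPderiv (d : Fin n → Derivation ℂ (KK n) (KK n)) : Prop :=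
  ∀ (i : Fin n) (r : OO n), d i (toK r) = toK (MvPolynomial.pderiv i r)

/-- Coefficientwise action of a derivation of `K` on `K[s]`. -/
def coeffDer (d : Derivation ℂ (KK n) (KK n)) :
    Derivation ℂ (Polynomial (KK n)) (Polynomial (KK n)) :=
  PolynomialModule.equivPolynomialSelf.compDer d.mapCoeffs

/-- Multiplication operator on `K[s]`. -/
def mulOp (a : Polynomial (KK n)) : Module.End ℂ (Polynomial (KK n)) :=
  LinearMap.mulLeft ℂ a

/-- Twisted partial-derivative operator on `K[s]·f^s`:
`∂ᵢ(g(s) f^s) = ((∂ᵢ g)(s) + s·g(s)·(∂ᵢf/f))·f^s`. -/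
def Dop (d : Derivation ℂ (KK n) (KK n)) (f : OO n) : Module.End ℂ (Polynomial (KK n)) :=
  (coeffDer d).toLinearMap + mulOp (Polynomial.X * Polynomial.C (d (toK f) / toK f))

/-- The image of `𝒟[s]` in `End(K[s]·f^s)`: the ℂ-algebra generated by multiplications by
elements of `𝒪`, multiplication by `s`, and the twisted partials `∂ᵢ`. -/
def WeylS (d : Fin n → Derivation ℂ (KK n) (KK n)) (f : OO n) :
    Subalgebra ℂ (Module.End ℂ (Polynomial (KK n))) :=
  Algebra.adjoin ℂ
    ((Set.range fun r : OO n => mulOp (Polynomial.C (toK r))) ∪ {mulOp Polynomial.X} ∪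
      Set.range fun i => Dop (d i) f)

/-- The `𝒟[s]`-orbit span `𝒟[s]·T` of a set `T ⊆ K[s]·f^s`. -/
def DSpan (d : Fin n → Derivation ℂ (KK n) (KK n)) (f : OO n)
    (T : Set (Polynomial (KK n))) : Submodule ℂ (Polynomial (KK n)) :=
  Submodule.span ℂ {y | ∃ P ∈ WeylS d f, ∃ t ∈ T, y = P t}

/-- The image of `𝒟` in `End(K)` (untwisted action). -/
def Weyl0 (d : Fin n → Derivation ℂ (KK n) (KK n)) : Subalgebra ℂ (Module.End ℂ (KK n)) :=
  Algebra.adjoin ℂ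
    ((Set.range fun r : OO n => LinearMap.mulLeft ℂ (toK r)) ∪
      Set.range fun i => (d i).toLinearMap)

/-- The `𝒟`-orbit span `𝒟·T` of a set `T ⊆ K`. -/
def DSpan0 (d : Fin n → Derivation ℂ (KK n) (KK n)) (T : Set (KK n)) : Submodule ℂ (KK n) :=
  Submodule.span ℂ {y | ∃ P ∈ Weyl0 d, ∃ t ∈ T, y = P t}

/-- The ℂ-submodule `Σ_{g ∈ G} 𝒪[1/g]` of `K`. -/
def locSub (G : Set (OO n)) : Submodule ℂ (KK n) :=
  Submodule.span ℂ {x | ∃ r : OO n, ∃ g ∈ G, ∃ k : ℕ, x = toK r * (toK g)⁻¹ ^ k}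

/-- Polynomials in `s` all of whose coefficients lie in `V`. -/
def polySub (V : Submodule ℂ (KK n)) : Submodule ℂ (Polynomial (KK n)) where
  carrier := {g | ∀ m, g.coeff m ∈ V}
  add_mem' := fun ha hb m => by simpa using V.add_mem (ha m) (hb m)
  zero_mem' := fun m => by rw [Polynomial.coeff_zero]; exact V.zero_mem
  smul_mem' := fun c g hg m => by
    simpa [Polynomial.coeff_smul] using V.smul_mem c (hg m)

/-- Maximal `(p+1)×(p+1)` minor of the Jacobian matrix of `(h₁,…,h_p,f)`
on the columns `cols`. -/
def minorHF {p : ℕ} (h : Fin p → OO n) (f : OO n) (cols : Fin (p + 1) → Fin n) : OO n :=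
  Matrix.det (Matrix.of fun i j =>
    Fin.lastCases (MvPolynomial.pderiv (cols j) f)
      (fun i' => MvPolynomial.pderiv (cols j) (h i')) i)

/-- `p×p` minor of the Jacobian matrix of `h = (h₁,…,h_p)` on the columns `cols`. -/
def minorH {p : ℕ} (h : Fin p → OO n) (cols : Fin p → Fin n) : OO n :=
  Matrix.det (Matrix.of fun i j => MvPolynomial.pderiv (cols j) (h i))

/-- Image of `b(s) ∈ ℂ[s]` in `K[s]`. -/
def bK {n : ℕ} (b : Polynomial ℂ) : Polynomial (KK n) :=
  b.map ((algebraMap (OO n) (KK n)).comp MvPolynomial.C)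

/-!
Both identities come from `∂ₖ g^m = 2m xₖ g^(m-1)` and Euler's formula
`∑ ∂ₖ(xₖ g^m) = (n + 2m) g^m`, since for `f = x_z` only `∂_z` sees the symbol `f^s`. Starting from
the Jacobian minors `2ℓ xᵢ g^(ℓ-1)`, the second identity puts `xᵢ g^j δ f^s` into
`𝒟[s](𝒥_{h,f}, f) δ f^s` for descending `j`: its scalar `2(j-ℓ)(n+2(j-ℓ)-1)` does not vanish when
`n` is even. At `j = 0` the first identity gives `(s + n - 2ℓ) δ f^s`.

Conversely, specialise `s` to `r = 2ℓ - n`. On `𝒪[1/g]` there is a residue functional which kills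
all derivatives; it vanishes on the `𝒟`-module generated by the specialised generators, because
those have the form `a/g^ℓ` with `a` homogeneous of degree greater than `r`. If `b` satisfies the
membership condition, then `b(r) f^r/g^ℓ` lies in this `𝒟`-module up to an element of
`𝒪[1/f] ∩ 𝒪[1/g] = 𝒪`, whose residue is zero as well. But the residue of `f^r/g^ℓ` is, up to a
nonzero factor, the Gaussian moment of even order `r`, which is positive. Hence `b(r) = 0`.
-/

/-- The moments `𝔼[xᵏ]` of a standard Gaussian variable. -/
def gaussianMoment : ℕ → ℕ
  | 0 => 1
  | 1 => 0
  | k + 2 => (k + 1) * gaussianMoment k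

lemma gaussianMoment_pos_of_even {k : ℕ} (hk : Even k) : 0 < gaussianMoment k := by
  obtain ⟨m, rfl⟩ := even_iff_exists_two_mul.1 hk
  induction m with
  | zero => exact one_pos
  | succ m ih => exact Nat.mul_pos (Nat.succ_pos _) (ih (even_two_mul m))

section Gaussian

variable {σ R : Type*} [Fintype σ] [CommSemiring R]

variable (σ R) in
/-- The quadratic form `∑ xᵢ²`. -/
def quadric : MvPolynomial σ R := ∑ i, MvPolynomial.X i ^ 2

lemma pderiv_quadric (k : σ) :
    MvPolynomial.pderiv k (quadric σ R) = 2 * MvPolynomial.X k := by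
  classical
  simp [quadric, MvPolynomial.pderiv_X, Pi.single_apply]

lemma pderiv_quadric_pow (k : σ) (m : ℕ) :
    MvPolynomial.pderiv k (quadric σ R ^ m) =
      MvPolynomial.C (2 * m : R) * (MvPolynomial.X k * quadric σ R ^ (m - 1)) := by
  rw [Derivation.leibniz_pow, pderiv_quadric]
  simp only [smul_eq_mul, nsmul_eq_mul, map_mul, map_natCast, map_ofNat]
  ring

lemma isHomogeneous_quadric : (quadric σ R).IsHomogeneous 2 :=
  MvPolynomial.IsHomogeneous.sum _ _ _ fun i _ => MvPolynomial.isHomogeneous_X_pow i 2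

lemma eval_single_quadric [DecidableEq σ] (i : σ) :
    MvPolynomial.eval (Pi.single i 1) (quadric σ R) = 1 := by
  simp [quadric, Pi.single_apply]

lemma quadric_ne_zero [Nonempty σ] [Nontrivial R] : quadric σ R ≠ 0 := by
  classical
  intro h
  simpa [h] using eval_single_quadric (R := R) (Classical.arbitrary σ)

lemma not_X_dvd_quadric [Nontrivial σ] [Nontrivial R] (z : σ) :
    ¬ MvPolynomial.X z ∣ quadric σ R := by
  classical
  intro h
  obtain ⟨i, hi⟩ := exists_ne z
  simpa [eval_single_quadric, hi.symm] using map_dvd (MvPolynomial.eval (Pi.single i 1)) h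

/-- The Gaussian mean of the degree `e` homogeneous component of a polynomial. -/
def gaussianMean (e : ℕ) : MvPolynomial σ R →ₗ[R] R :=
  (MvPolynomial.basisMonomials σ R).constr R
    fun α => if α.degree = e then ∏ i, (gaussianMoment (α i) : R) else 0

lemma gaussianMean_monomial (e : ℕ) (α : σ →₀ ℕ) (r : R) :
    gaussianMean e (MvPolynomial.monomial α r) =
      if α.degree = e then r * ∏ i, (gaussianMoment (α i) : R) else 0 := by
  have h := (MvPolynomial.basisMonomials σ R).constr_basis R
    (fun α => if α.degree = e then ∏ i, (gaussianMoment (α i) : R) else 0) α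
  rw [MvPolynomial.coe_basisMonomials] at h
  rw [← mul_one r, ← smul_eq_mul, ← MvPolynomial.smul_monomial, map_smul, gaussianMean, h]
  simp

lemma prod_gaussianMoment_add_single (β : σ →₀ ℕ) (j : σ) :
    ∏ i, (gaussianMoment ((β + Finsupp.single j 2 : σ →₀ ℕ) i) : R) =
      (β j + 1) * ∏ i, (gaussianMoment (β i) : R) := by
  classical
  rw [← Finset.mul_prod_erase _ _ (Finset.mem_univ j),
    ← Finset.mul_prod_erase _ (fun i => (gaussianMoment (β i) : R)) (Finset.mem_univ j),
    ← mul_assoc]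
  congr 1
  · simp [gaussianMoment]
  · refine Finset.prod_congr rfl fun i hi => ?_
    simp [Finsupp.single_eq_of_ne (Finset.ne_of_mem_erase hi)]

/-- Integration by parts against the Gaussian density. -/
lemma gaussianMean_pderiv (e : ℕ) (j : σ) (p : MvPolynomial σ R) :
    gaussianMean e (MvPolynomial.pderiv j p) = gaussianMean (e + 2) (MvPolynomial.X j * p) := by
  suffices h : gaussianMean e ∘ₗ (MvPolynomial.pderiv j).toLinearMap =
      gaussianMean (e + 2) ∘ₗ LinearMap.mulLeft R (MvPolynomial.X j : MvPolynomial σ R) from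
    LinearMap.congr_fun h p
  refine (MvPolynomial.basisMonomials σ R).ext fun α => ?_
  have hX : (MvPolynomial.X j : MvPolynomial σ R) * MvPolynomial.monomial α 1 =
      MvPolynomial.monomial (α + Finsupp.single j 1) 1 := by
    rw [MvPolynomial.X, MvPolynomial.monomial_mul, add_comm, one_mul]
  simp only [MvPolynomial.coe_basisMonomials, LinearMap.comp_apply, Derivation.coeFn_coe,
    LinearMap.mulLeft_apply, hX, MvPolynomial.pderiv_monomial, one_mul, gaussianMean_monomial]
  obtain h0 | h0 := eq_or_ne (α j) 0
  · have hvanish : ∏ i, (gaussianMoment ((α + Finsupp.single j 1 : σ →₀ ℕ) i) : R) = 0 :=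
      Finset.prod_eq_zero (Finset.mem_univ j) (by simp [h0, gaussianMoment])
    rw [h0, hvanish]
    simp
  · obtain ⟨β, rfl⟩ : ∃ β, α = β + Finsupp.single j 1 :=
      ⟨α - Finsupp.single j 1, (Finsupp.sub_add_single_one_cancel h0).symm⟩
    simp only [add_assoc, ← Finsupp.single_add, Nat.reduceAdd,
      prod_gaussianMoment_add_single, add_tsub_cancel_right,
      map_add, Finsupp.degree_single, Nat.add_right_cancel_iff]
    simp

lemma gaussianMean_sum_X_mul_pderiv (e : ℕ) (p : MvPolynomial σ R) :
    gaussianMean e (∑ j, MvPolynomial.X j * MvPolynomial.pderiv j p) = e * gaussianMean e p := by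
  induction p using MvPolynomial.induction_on' with
  | monomial α r =>
    simp only [MvPolynomial.X_mul_pderiv_monomial, ← Finset.sum_smul, map_nsmul,
      gaussianMean_monomial, ← Finsupp.degree_eq_sum]
    split_ifs with h <;> simp [h]
  | add p q hp hq =>
    simp only [map_add, mul_add, Finset.sum_add_distrib, hp, hq]

lemma gaussianMean_quadric_mul (e : ℕ) (p : MvPolynomial σ R) :
    gaussianMean (e + 2) (quadric σ R * p) = (Fintype.card σ + e) * gaussianMean e p := by
  have hX (i : σ) : gaussianMean (e + 2) (MvPolynomial.X i ^ 2 * p) =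
      gaussianMean e p + gaussianMean e (MvPolynomial.X i * MvPolynomial.pderiv i p) := by
    rw [pow_two, mul_assoc, ← gaussianMean_pderiv, MvPolynomial.pderiv_mul,
      MvPolynomial.pderiv_X_self, one_mul, map_add]
  rw [quadric, Finset.sum_mul, map_sum, Finset.sum_congr rfl fun i _ => hX i,
    Finset.sum_add_distrib, ← map_sum (gaussianMean e) fun i => _ * _,
    gaussianMean_sum_X_mul_pderiv]
  simp [add_mul]

lemma gaussianMean_quadric_pow_mul (e k : ℕ) (p : MvPolynomial σ R) :
    gaussianMean (e + 2 * k) (quadric σ R ^ k * p) =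
      (∏ i ∈ Finset.range k, ((Fintype.card σ + e + 2 * i : ℕ) : R)) * gaussianMean e p := by
  induction k with
  | zero => simp
  | succ k ih =>
    rw [pow_succ', mul_assoc, Nat.mul_succ, ← add_assoc, gaussianMean_quadric_mul, ih,
      Finset.prod_range_succ]
    push_cast
    ring

lemma gaussianMean_quadric_pow_mul_eq_zero_iff [Nonempty σ] [CharZero R] [NoZeroDivisors R]
    (e k : ℕ) (p : MvPolynomial σ R) :
    gaussianMean (e + 2 * k) (quadric σ R ^ k * p) = 0 ↔ gaussianMean e p = 0 := by
  have hpos : 0 < Fintype.card σ := Fintype.card_pos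
  rw [gaussianMean_quadric_pow_mul, mul_eq_zero, or_iff_right]
  exact Finset.prod_ne_zero_iff.2 fun i _ => Nat.cast_ne_zero.2 (by omega)

lemma gaussianMean_eq_zero_of_isHomogeneous {e k : ℕ} {p : MvPolynomial σ R}
    (hp : p.IsHomogeneous k) (hk : k ≠ e) : gaussianMean e p = 0 := by
  rw [p.as_sum, map_sum]
  refine Finset.sum_eq_zero fun α hα => ?_
  have hdeg : α.degree = k := by
    by_contra h
    exact MvPolynomial.mem_support_iff.1 hα (hp.coeff_eq_zero h)
  rw [gaussianMean_monomial, if_neg (hdeg ▸ hk)]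

lemma gaussianMean_mul_eq_zero_of_lt {e k : ℕ} {a : MvPolynomial σ R} (ha : a.IsHomogeneous k)
    (hk : e < k) (q : MvPolynomial σ R) : gaussianMean e (q * a) = 0 := by
  rw [← MvPolynomial.sum_homogeneousComponent q, Finset.sum_mul, map_sum]
  exact Finset.sum_eq_zero fun i _ => gaussianMean_eq_zero_of_isHomogeneous
    ((MvPolynomial.homogeneousComponent_isHomogeneous i q).mul ha) (by omega)

lemma gaussianMean_X_pow (z : σ) (r : ℕ) :
    gaussianMean r (MvPolynomial.X z ^ r : MvPolynomial σ R) = gaussianMoment r := by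
  classical
  rw [MvPolynomial.X_pow_eq_monomial, gaussianMean_monomial, if_pos (Finsupp.degree_single _ _),
    one_mul, Finset.prod_eq_single z (fun i _ hi => by
      simp [Finsupp.single_eq_of_ne hi, gaussianMoment]) (by simp), Finsupp.single_eq_same]

end Gaussian

section FractionField

lemma toK_zero : toK (0 : OO n) = 0 := map_zero _

lemma toK_one : toK (1 : OO n) = 1 := map_one _

lemma toK_add (a b : OO n) : toK (a + b) = toK a + toK b := map_add _ _ _

lemma toK_neg (a : OO n) : toK (-a) = -toK a := map_neg _ _

lemma toK_sub (a b : OO n) : toK (a - b) = toK a - toK b := map_sub _ _ _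

lemma toK_mul (a b : OO n) : toK (a * b) = toK a * toK b := map_mul _ _ _

lemma toK_pow (a : OO n) (k : ℕ) : toK (a ^ k) = toK a ^ k := map_pow _ _ _

lemma toK_sum {ι : Type*} (s : Finset ι) (a : ι → OO n) :
    toK (∑ i ∈ s, a i) = ∑ i ∈ s, toK (a i) := map_sum _ _ _

lemma toK_C (c : ℂ) : toK (MvPolynomial.C c : OO n) = algebraMap ℂ (KK n) c :=
  (IsScalarTower.algebraMap_apply ℂ (OO n) (KK n) c).symm

lemma toK_C_intCast (m : ℤ) : toK (MvPolynomial.C (m : ℂ) : OO n) = m := by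
  rw [toK_C, map_intCast]

lemma toK_smul (c : ℂ) (a : OO n) : toK (c • a) = c • toK a := by
  rw [Algebra.smul_def, Algebra.smul_def, toK_mul, MvPolynomial.algebraMap_eq, toK_C]

lemma toK_injective : Function.Injective (toK : OO n → KK n) :=
  IsFractionRing.injective (OO n) (KK n)

lemma toK_ne_zero {a : OO n} (ha : a ≠ 0) : toK a ≠ 0 := fun h =>
  ha (toK_injective (h.trans toK_zero.symm))

lemma toK_X_ne_zero (z : Fin n) : toK (MvPolynomial.X z : OO n) ≠ 0 :=
  toK_ne_zero (MvPolynomial.X_ne_zero z)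

lemma toK_quadric_ne_zero [NeZero n] : toK (quadric (Fin n) ℂ) ≠ 0 :=
  toK_ne_zero quadric_ne_zero

end FractionField

section Derivations

variable {d : Fin n → Derivation ℂ (KK n) (KK n)}

lemma ExtendsPderiv.apply_X_self (hd : ExtendsPderiv d) (i : Fin n) :
    d i (toK (MvPolynomial.X i)) = 1 := by
  rw [hd, MvPolynomial.pderiv_X_self, toK_one]

lemma ExtendsPderiv.apply_X_of_ne (hd : ExtendsPderiv d) {i z : Fin n} (h : i ≠ z) :
    d i (toK (MvPolynomial.X z)) = 0 := by
  rw [hd, MvPolynomial.pderiv_X_of_ne h.symm, toK_zero]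

lemma ExtendsPderiv.apply_quadric_zpow (hd : ExtendsPderiv d) (k : Fin n) (m : ℤ) :
    d k (toK (quadric (Fin n) ℂ) ^ m) =
      2 * (m : KK n) * toK (MvPolynomial.X k) * toK (quadric (Fin n) ℂ) ^ (m - 1) := by
  have htwo : toK (2 : OO n) = 2 := map_ofNat (algebraMap (OO n) (KK n)) 2
  rw [Derivation.leibniz_zpow, hd, pderiv_quadric, toK_mul, htwo, zsmul_eq_mul, smul_eq_mul]
  ring

lemma ExtendsPderiv.apply_X_mul_quadric_zpow (hd : ExtendsPderiv d) (k : Fin n) (m : ℤ) :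
    d k (toK (MvPolynomial.X k) * toK (quadric (Fin n) ℂ) ^ m) =
      toK (quadric (Fin n) ℂ) ^ m +
        2 * (m : KK n) * toK (MvPolynomial.X k ^ 2) * toK (quadric (Fin n) ℂ) ^ (m - 1) := by
  rw [Derivation.leibniz, hd.apply_quadric_zpow, hd.apply_X_self, toK_pow, smul_eq_mul,
    smul_eq_mul]
  ring

lemma ExtendsPderiv.sum_apply_X_mul_quadric_zpow [NeZero n] (hd : ExtendsPderiv d) (m : ℤ) :
    ∑ i, d i (toK (MvPolynomial.X i) * toK (quadric (Fin n) ℂ) ^ m) =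
      (n + 2 * m) * toK (quadric (Fin n) ℂ) ^ m := by
  simp only [hd.apply_X_mul_quadric_zpow, Finset.sum_add_distrib, Finset.sum_const,
    Finset.card_univ, Fintype.card_fin, nsmul_eq_mul, ← Finset.sum_mul, ← Finset.mul_sum, ← toK_sum]
  rw [← quadric, mul_assoc, ← zpow_one_add₀ toK_quadric_ne_zero, add_sub_cancel]
  ring

lemma ExtendsPderiv.sum_erase_apply_X_mul_quadric_zpow [NeZero n] (hd : ExtendsPderiv d)
    (z : Fin n) (m : ℤ) :
    2 * (m : KK n) * toK (MvPolynomial.X z ^ 2) * toK (quadric (Fin n) ℂ) ^ (m - 1) +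
        ∑ k ∈ Finset.univ.erase z, d k (toK (MvPolynomial.X k) * toK (quadric (Fin n) ℂ) ^ m) =
      ((n + 2 * m - 1 : ℤ) : KK n) * toK (quadric (Fin n) ℂ) ^ m := by
  have hz := Finset.add_sum_erase Finset.univ
    (fun k => d k (toK (MvPolynomial.X k) * toK (quadric (Fin n) ℂ) ^ m)) (Finset.mem_univ z)
  rw [hd.sum_apply_X_mul_quadric_zpow, hd.apply_X_mul_quadric_zpow] at hz
  push_cast
  linear_combination hz

end Derivations

section TwistedDerivative

lemma coeffDer_C (D : Derivation ℂ (KK n) (KK n)) (a : KK n) : coeffDer D (C a) = C (D a) := by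
  simp [coeffDer]

lemma coeffDer_X (D : Derivation ℂ (KK n) (KK n)) : coeffDer D X = 0 := by
  simp [coeffDer]

lemma eval_coeffDer (D : Derivation ℂ (KK n) (KK n)) {a : KK n} (ha : D a = 0) (u : (KK n)[X]) :
    (coeffDer D u).eval a = D (u.eval a) := by
  induction u using Polynomial.induction_on' with
  | add p q hp hq => simp only [map_add, eval_add, hp, hq]
  | monomial k b =>
    rw [← C_mul_X_pow_eq_monomial, Derivation.leibniz, Derivation.leibniz_pow, coeffDer_X,
      coeffDer_C]
    simp [Derivation.leibniz, Derivation.leibniz_pow, ha, mul_comm (D b)]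

lemma Dop_C (D : Derivation ℂ (KK n) (KK n)) (f : OO n) (a : KK n) :
    Dop D f (C a) = C (D a) + X * C (D (toK f) / toK f * a) := by
  simp only [Dop, LinearMap.add_apply, mulOp, LinearMap.mulLeft_apply, Derivation.coeFn_coe,
    coeffDer_C, mul_assoc, C_mul]

variable {d : Fin n → Derivation ℂ (KK n) (KK n)}

lemma Dop_X_C_of_ne (hd : ExtendsPderiv d) {k z : Fin n} (hk : k ≠ z) (a : KK n) :
    Dop (d k) (MvPolynomial.X z) (C a) = C (d k a) := by
  simp [Dop_C, hd.apply_X_of_ne hk]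

lemma Dop_X_self_C (hd : ExtendsPderiv d) (z : Fin n) (a : KK n) :
    Dop (d z) (MvPolynomial.X z) (C (toK (MvPolynomial.X z) * a)) =
      C (d z (toK (MvPolynomial.X z) * a)) + X * C a := by
  rw [Dop_C, hd.apply_X_self, ← mul_assoc, one_div_mul_cancel (toK_X_ne_zero z), one_mul]

lemma sum_Dop_X_mul_C (hd : ExtendsPderiv d) (z : Fin n) (a : KK n) :
    ∑ i, Dop (d i) (MvPolynomial.X z) (C (toK (MvPolynomial.X i) * a)) =
      C (∑ i, d i (toK (MvPolynomial.X i) * a)) + X * C a := by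
  rw [← Finset.add_sum_erase _ _ (Finset.mem_univ z), Dop_X_self_C hd,
    Finset.sum_congr rfl fun i hi => Dop_X_C_of_ne hd (Finset.ne_of_mem_erase hi) _,
    ← Finset.add_sum_erase _ _ (Finset.mem_univ z), map_add, map_sum]
  ring

end TwistedDerivative

/-- The representative `1/g^ℓ` of the local cohomology class `δ_h`, for `h = g^ℓ`. -/
def quadricDelta (n ℓ : ℕ) : KK n := (toK (quadric (Fin n) ℂ ^ ℓ))⁻¹

section Identities

variable {ℓ : ℕ} {d : Fin n → Derivation ℂ (KK n) (KK n)}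

lemma toK_quadric_pow_mul_quadricDelta [NeZero n] (j : ℕ) :
    toK (quadric (Fin n) ℂ ^ j) * quadricDelta n ℓ = toK (quadric (Fin n) ℂ) ^ (j - ℓ : ℤ) := by
  rw [quadricDelta, toK_pow, toK_pow, zpow_sub₀ toK_quadric_ne_zero, zpow_natCast, zpow_natCast,
    div_eq_mul_inv]

lemma quadricDelta_eq_zpow (n ℓ : ℕ) : quadricDelta n ℓ = toK (quadric (Fin n) ℂ) ^ (-ℓ : ℤ) := by
  rw [quadricDelta, toK_pow, zpow_neg, zpow_natCast]

theorem X_add_C_mul_quadricDelta (hd : ExtendsPderiv d) (z : Fin n) :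
    (X + C (toK (MvPolynomial.C ((n : ℂ) - 2 * (ℓ : ℂ))))) * C (quadricDelta n ℓ) =
      ∑ i, Dop (d i) (MvPolynomial.X z)
        (mulOp (C (toK (MvPolynomial.X i))) (C (quadricDelta n ℓ))) := by
  have : NeZero n := ⟨z.pos.ne'⟩
  have hconst : ((n : ℂ) - 2 * (ℓ : ℂ)) = ((n + 2 * -ℓ : ℤ) : ℂ) := by
    push_cast
    ring
  simp only [mulOp, LinearMap.mulLeft_apply, ← C_mul]
  rw [sum_Dop_X_mul_C hd, quadricDelta_eq_zpow, hd.sum_apply_X_mul_quadric_zpow, hconst,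
    toK_C_intCast, C_mul]
  push_cast
  ring

theorem Dop_quadric_pow_mul_quadricDelta (hd : ExtendsPderiv d) {i z : Fin n} (hi : i ≠ z)
    (j : ℕ) :
    Dop (d i) (MvPolynomial.X z)
        (C (toK (MvPolynomial.C (2 * (((j + 1 : ℕ) : ℂ) - (ℓ : ℂ))) *
            (quadric (Fin n) ℂ ^ j * MvPolynomial.X z ^ 2)) * quadricDelta n ℓ) +
          ∑ k ∈ Finset.univ.erase z, Dop (d k) (MvPolynomial.X z)
            (C (toK (MvPolynomial.X k * quadric (Fin n) ℂ ^ (j + 1)) * quadricDelta n ℓ))) =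
      C (toK (MvPolynomial.C (2 * (((j + 1 : ℕ) : ℂ) - (ℓ : ℂ)) *
            ((n : ℂ) + 2 * (((j + 1 : ℕ) : ℂ) - (ℓ : ℂ)) - 1)) *
          (MvPolynomial.X i * quadric (Fin n) ℂ ^ j)) * quadricDelta n ℓ) := by
  have : NeZero n := ⟨z.pos.ne'⟩
  set m : ℤ := (j + 1 : ℕ) - ℓ with hm
  have hc₁ : 2 * (((j + 1 : ℕ) : ℂ) - (ℓ : ℂ)) = ((2 * m : ℤ) : ℂ) := by push_cast [hm]; ring
  have hc₂ : 2 * (((j + 1 : ℕ) : ℂ) - (ℓ : ℂ)) *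
      ((n : ℂ) + 2 * (((j + 1 : ℕ) : ℂ) - (ℓ : ℂ)) - 1) =
      ((2 * m * (n + 2 * m - 1) : ℤ) : ℂ) := by push_cast [hm]; ring
  have hj : toK (quadric (Fin n) ℂ ^ j) * quadricDelta n ℓ =
      toK (quadric (Fin n) ℂ) ^ (m - 1) := by
    rw [toK_quadric_pow_mul_quadricDelta, hm]; congr 1; push_cast; ring
  have hsum : ∑ k ∈ Finset.univ.erase z, Dop (d k) (MvPolynomial.X z)
      (C (toK (MvPolynomial.X k * quadric (Fin n) ℂ ^ (j + 1)) * quadricDelta n ℓ)) =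
      C (∑ k ∈ Finset.univ.erase z,
        d k (toK (MvPolynomial.X k) * toK (quadric (Fin n) ℂ) ^ m)) := by
    rw [map_sum]
    refine Finset.sum_congr rfl fun k hk => ?_
    rw [Dop_X_C_of_ne hd (Finset.ne_of_mem_erase hk), toK_mul, mul_assoc,
      toK_quadric_pow_mul_quadricDelta]
  have hfirst : toK (MvPolynomial.C (2 * (((j + 1 : ℕ) : ℂ) - (ℓ : ℂ))) *
      (quadric (Fin n) ℂ ^ j * MvPolynomial.X z ^ 2)) * quadricDelta n ℓ =
      2 * (m : KK n) * toK (MvPolynomial.X z ^ 2) * toK (quadric (Fin n) ℂ) ^ (m - 1) := by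
    rw [hc₁, toK_mul, toK_C_intCast, ← hj, toK_mul]
    push_cast
    ring
  rw [hsum, hfirst, ← C_add, hd.sum_erase_apply_X_mul_quadric_zpow, Dop_X_C_of_ne hd hi,
    Derivation.leibniz, Derivation.map_intCast, hd.apply_quadric_zpow, ← hj, hc₂, toK_mul,
    toK_C_intCast, toK_mul, smul_zero, add_zero, smul_eq_mul]
  congr 1
  push_cast
  ring

end Identities

section Span

variable {d : Fin n → Derivation ℂ (KK n) (KK n)} {f : OO n} {T : Set (KK n)[X]}

lemma subset_DSpan : T ⊆ DSpan d f T := fun y hy =>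
  Submodule.subset_span ⟨1, one_mem _, y, hy, rfl⟩

lemma apply_mem_DSpan {P : Module.End ℂ (KK n)[X]} (hP : P ∈ WeylS d f) {y : (KK n)[X]}
    (hy : y ∈ DSpan d f T) : P y ∈ DSpan d f T := by
  suffices h : DSpan d f T ≤ (DSpan d f T).comap P from h hy
  refine Submodule.span_le.2 ?_
  rintro _ ⟨Q, hQ, t, ht, rfl⟩
  exact Submodule.subset_span ⟨P * Q, mul_mem hP hQ, t, ht, rfl⟩

lemma Dop_mem_DSpan (i : Fin n) {y : (KK n)[X]} (hy : y ∈ DSpan d f T) :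
    Dop (d i) f y ∈ DSpan d f T :=
  apply_mem_DSpan (Algebra.subset_adjoin (Or.inr ⟨i, rfl⟩)) hy

lemma C_toK_mul_mem_DSpan (q : OO n) {a : KK n} (ha : C a ∈ DSpan d f T) :
    C (toK q * a) ∈ DSpan d f T := by
  have hq : mulOp (C (toK q)) ∈ WeylS d f := Algebra.subset_adjoin (Or.inl (Or.inl ⟨q, rfl⟩))
  simpa only [mulOp, LinearMap.mulLeft_apply, ← C_mul] using apply_mem_DSpan hq ha

lemma C_toK_C_mul_mem_iff (W : Submodule ℂ (KK n)[X]) {c : ℂ} (hc : c ≠ 0) (q : OO n) (a : KK n) :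
    C (toK (MvPolynomial.C c * q) * a) ∈ W ↔ C (toK q * a) ∈ W := by
  rw [MvPolynomial.C_mul', toK_smul, smul_mul_assoc, ← smul_C, W.smul_mem_iff hc]

end Span

/-- The generators of the `𝒟[s]`-module `𝒟[s](𝒥_{h,f}, f) δ f^s`, for a single function `h` and a
representative `δ` of a local cohomology class. -/
def bPrimeGenerators (h f : OO n) (δ : KK n) : Set (KK n)[X] :=
  {y | ∃ cols : Fin 2 → Fin n, StrictMono cols ∧
    y = C (toK (minorHF (fun _ : Fin 1 => h) f cols) * δ)} ∪ {C (toK f * δ)}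

/-- The condition `b(s) δ f^s ∈ 𝒟[s](𝒥_{h,f}, f) δ f^s`, whose minimal monic solution is
`b'_f(h, s)`. The class of `δ` is taken modulo `𝒪[1/f]`, coefficientwise in `s`. -/
def IsBPrimeMultiple (d : Fin n → Derivation ℂ (KK n) (KK n)) (h f : OO n) (δ : KK n) (b : ℂ[X]) :
    Prop :=
  bK b * C δ ∈ DSpan d f (bPrimeGenerators h f δ) ⊔ polySub (locSub {f})

section Membership

lemma minorHF_fin_one (h f : OO n) (cols : Fin 2 → Fin n) :
    minorHF (fun _ : Fin 1 => h) f cols =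
      MvPolynomial.pderiv (cols 0) h * MvPolynomial.pderiv (cols 1) f -
        MvPolynomial.pderiv (cols 1) h * MvPolynomial.pderiv (cols 0) f := by
  have hlast (a : OO n) (b : Fin 1 → OO n) : (Fin.lastCases a b (1 : Fin 2) : OO n) = a :=
    Fin.lastCases_last (motive := fun _ => OO n)
  have hzero (a : OO n) (b : Fin 1 → OO n) : (Fin.lastCases a b (0 : Fin 2) : OO n) = b 0 :=
    Fin.lastCases_castSucc (motive := fun _ => OO n) (i := (0 : Fin 1))
  rw [minorHF, Matrix.det_fin_two]
  simp only [Matrix.of_apply, hlast, hzero]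

variable {ℓ : ℕ} {d : Fin n → Derivation ℂ (KK n) (KK n)} {i z : Fin n}

lemma C_toK_jacobian_minor_mul_mem_DSpan {a b : Fin n} (hab : a < b) (h f : OO n) (δ : KK n) :
    C (toK (MvPolynomial.pderiv a h * MvPolynomial.pderiv b f -
      MvPolynomial.pderiv b h * MvPolynomial.pderiv a f) * δ) ∈
        DSpan d f (bPrimeGenerators h f δ) :=
  subset_DSpan (Or.inl ⟨![a, b], by simpa using hab, by simp [minorHF_fin_one]⟩)

lemma C_X_mul_quadric_pow_pred_mem_DSpan (hℓ : ℓ ≠ 0) (hi : i ≠ z) (δ : KK n) :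
    C (toK (MvPolynomial.X i * quadric (Fin n) ℂ ^ (ℓ - 1)) * δ) ∈
      DSpan d (MvPolynomial.X z)
        (bPrimeGenerators (quadric (Fin n) ℂ ^ ℓ) (MvPolynomial.X z) δ) := by
  have hc : (2 * ℓ : ℂ) ≠ 0 := mul_ne_zero two_ne_zero (Nat.cast_ne_zero.2 hℓ)
  rw [← C_toK_C_mul_mem_iff _ hc, ← pderiv_quadric_pow]
  obtain hlt | hgt := lt_or_gt_of_ne hi
  · simpa [MvPolynomial.pderiv_X_of_ne hi.symm] using
      C_toK_jacobian_minor_mul_mem_DSpan (d := d) hlt (quadric (Fin n) ℂ ^ ℓ) (MvPolynomial.X z) δ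
  · simpa [MvPolynomial.pderiv_X_of_ne hi.symm, toK_neg] using
      C_toK_jacobian_minor_mul_mem_DSpan (d := d) hgt (quadric (Fin n) ℂ ^ ℓ) (MvPolynomial.X z) δ

lemma C_X_mul_quadric_pow_mem_DSpan_of_succ (hd : ExtendsPderiv d) {T : Set (KK n)[X]} {j : ℕ}
    (hz : C (toK (MvPolynomial.X z) * quadricDelta n ℓ) ∈ DSpan d (MvPolynomial.X z) T)
    (hjℓ : j + 1 ≠ ℓ) (hnj : n + 2 * (j + 1) ≠ 2 * ℓ + 1)
    (hsucc : ∀ k ≠ z, C (toK (MvPolynomial.X k * quadric (Fin n) ℂ ^ (j + 1)) * quadricDelta n ℓ) ∈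
      DSpan d (MvPolynomial.X z) T) (hi : i ≠ z) :
    C (toK (MvPolynomial.X i * quadric (Fin n) ℂ ^ j) * quadricDelta n ℓ) ∈
      DSpan d (MvPolynomial.X z) T := by
  have hcoeff : 2 * (((j + 1 : ℕ) : ℂ) - (ℓ : ℂ)) *
      ((n : ℂ) + 2 * (((j + 1 : ℕ) : ℂ) - (ℓ : ℂ)) - 1) ≠ 0 := by
    refine mul_ne_zero (mul_ne_zero two_ne_zero (sub_ne_zero.2 (Nat.cast_injective.ne hjℓ))) ?_
    contrapose! hnj
    rw [← Nat.cast_inj (R := ℂ)]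
    push_cast at hnj ⊢
    linear_combination hnj
  rw [← C_toK_C_mul_mem_iff _ hcoeff, ← Dop_quadric_pow_mul_quadricDelta hd hi]
  refine Dop_mem_DSpan i (add_mem ?_ (sum_mem fun k hk =>
    Dop_mem_DSpan k (hsucc k (Finset.ne_of_mem_erase hk))))
  rw [sq, ← mul_assoc, ← mul_assoc, toK_mul, mul_assoc]
  exact C_toK_mul_mem_DSpan _ hz

lemma C_X_mul_quadric_pow_mem_DSpan (hd : ExtendsPderiv d) (hnℓ : Even n ∨ 2 * ℓ ≤ n) {j : ℕ}
    (hj : j < ℓ) (hi : i ≠ z) :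
    C (toK (MvPolynomial.X i * quadric (Fin n) ℂ ^ j) * quadricDelta n ℓ) ∈
      DSpan d (MvPolynomial.X z) (bPrimeGenerators (quadric (Fin n) ℂ ^ ℓ) (MvPolynomial.X z)
        (quadricDelta n ℓ)) := by
  obtain ⟨t, hℓ⟩ : ∃ t, j + t + 1 = ℓ := ⟨ℓ - j - 1, by omega⟩
  clear hj
  induction t generalizing i j with
  | zero =>
    obtain rfl : j = ℓ - 1 := by omega
    exact C_X_mul_quadric_pow_pred_mem_DSpan (by omega) hi _
  | succ t ih =>
    refine C_X_mul_quadric_pow_mem_DSpan_of_succ hd (subset_DSpan (Or.inr rfl)) (by omega) ?_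
      (fun k hk => ih hk (by omega)) hi
    obtain ⟨m, rfl⟩ | hle := hnℓ <;> omega

lemma bK_X_add_C (c : ℂ) : bK (X + C c) = X + C (toK (MvPolynomial.C c) : KK n) := by
  rw [bK, Polynomial.map_add, Polynomial.map_X, Polynomial.map_C]
  rfl

theorem isBPrimeMultiple_quadric_pow (hd : ExtendsPderiv d) (hℓ : 1 ≤ ℓ)
    (hnℓ : Even n ∨ 2 * ℓ ≤ n) (z : Fin n) :
    IsBPrimeMultiple d (quadric (Fin n) ℂ ^ ℓ) (MvPolynomial.X z) (quadricDelta n ℓ)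
      (X + C ((n : ℂ) - 2 * (ℓ : ℂ))) := by
  refine Submodule.mem_sup_left ?_
  rw [bK_X_add_C, X_add_C_mul_quadricDelta hd z]
  refine sum_mem fun i _ => Dop_mem_DSpan i ?_
  rw [mulOp, LinearMap.mulLeft_apply, ← C_mul]
  obtain rfl | hi := eq_or_ne i z
  · exact subset_DSpan (Or.inr rfl)
  · simpa using C_X_mul_quadric_pow_mem_DSpan hd hnℓ hℓ hi

end Membership

section Localization

lemma mem_locSub_singleton {f : OO n} (hf : f ≠ 0) {v : KK n} :
    v ∈ locSub {f} ↔ ∃ (k : ℕ) (a : OO n), v * toK f ^ k = toK a := by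
  have hf' := toK_ne_zero hf
  constructor
  · intro hv
    induction hv using Submodule.span_induction with
    | mem x hx =>
      obtain ⟨a, _, rfl, k, rfl⟩ := hx
      exact ⟨k, a, by rw [inv_pow, inv_mul_cancel_right₀ (pow_ne_zero k hf')]⟩
    | zero => exact ⟨0, 0, by simp [toK_zero]⟩
    | add x y _ _ hx hy =>
      obtain ⟨k, a, hk⟩ := hx
      obtain ⟨l, b, hl⟩ := hy
      refine ⟨k + l, f ^ l * a + f ^ k * b, ?_⟩
      rw [toK_add, toK_mul, toK_mul, ← hk, ← hl, toK_pow, toK_pow]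
      ring
    | smul c x _ hx =>
      obtain ⟨k, a, hk⟩ := hx
      exact ⟨k, c • a, by rw [toK_smul, ← hk, smul_mul_assoc]⟩
  · rintro ⟨k, a, hk⟩
    refine Submodule.subset_span ⟨a, f, rfl, k, ?_⟩
    rw [← hk, inv_pow, mul_inv_cancel_right₀ (pow_ne_zero k hf')]

lemma toK_mul_mem_locSub_singleton {f : OO n} (hf : f ≠ 0) (q : OO n) {v : KK n}
    (hv : v ∈ locSub {f}) : toK q * v ∈ locSub {f} := by
  obtain ⟨k, a, hk⟩ := (mem_locSub_singleton hf).1 hv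
  exact (mem_locSub_singleton hf).2 ⟨k, q * a, by rw [mul_assoc, hk, toK_mul]⟩

lemma exists_toK_eq_of_mem_locSub {f g : OO n} (hf : Prime f) (hfg : ¬ f ∣ g) {v : KK n}
    (hvf : v ∈ locSub {f}) (hvg : v ∈ locSub {g}) : ∃ q, toK q = v := by
  have hg : g ≠ 0 := by
    rintro rfl
    exact hfg (dvd_zero f)
  obtain ⟨k, a, ha⟩ := (mem_locSub_singleton hf.ne_zero).1 hvf
  obtain ⟨m, b, hb⟩ := (mem_locSub_singleton hg).1 hvg
  have hab : a * g ^ m = f ^ k * b := toK_injective <| by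
    rw [toK_mul, toK_mul, ← ha, ← hb, toK_pow, toK_pow]
    ring
  obtain ⟨q, rfl⟩ := hf.pow_dvd_of_dvd_mul_right k (fun h => hfg (hf.dvd_of_dvd_pow h))
    (Dvd.intro _ hab.symm)
  refine ⟨q, mul_left_cancel₀ (pow_ne_zero k (toK_ne_zero hf.ne_zero)) ?_⟩
  rw [← toK_pow, ← toK_mul, ← ha, toK_pow, mul_comm]

end Localization

section Residue

variable [NeZero n]

variable (n) in
/-- The kernel of the residue functional on `𝒪[1/g]`, `g = ∑ xᵢ²`, that annihilates total
derivatives. The residue of `p/g^m` is the integral over the unit sphere of its component of degree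
`-n`, which comes from the component of `p` of degree `e = 2m - n`. It is encoded by the Gaussian
mean of the latter, to which it is proportional with a nonzero factor depending on `e`. -/
def residueKer : Submodule ℂ (KK n) where
  carrier := {v | ∃ m e : ℕ, e + n = 2 * m ∧
    ∃ p : OO n, v * toK (quadric (Fin n) ℂ) ^ m = toK p ∧ gaussianMean e p = 0}
  zero_mem' := ⟨n, n, (two_mul n).symm, 0, by rw [zero_mul, toK_zero], map_zero _⟩
  add_mem' := by
    rintro a b ⟨m, e, he, p, hp, hp₀⟩ ⟨m', e', he', p', hp', hp₀'⟩
    refine ⟨m + m', e + 2 * m', by omega, quadric (Fin n) ℂ ^ m' * p + quadric (Fin n) ℂ ^ m * p',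
      ?_, ?_⟩
    · rw [toK_add, toK_mul, toK_mul, ← hp, ← hp', toK_pow, toK_pow]
      ring
    · rw [map_add, (gaussianMean_quadric_pow_mul_eq_zero_iff e m' p).2 hp₀, zero_add,
        show e + 2 * m' = e' + 2 * m by omega]
      exact (gaussianMean_quadric_pow_mul_eq_zero_iff e' m p').2 hp₀'
  smul_mem' := by
    rintro c v ⟨m, e, he, p, hp, hp₀⟩
    exact ⟨m, e, he, c • p, by rw [smul_mul_assoc, hp, toK_smul], by rw [map_smul, hp₀, smul_zero]⟩

lemma mem_residueKer_iff {v : KK n} {m e : ℕ} (he : e + n = 2 * m) {p : OO n}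
    (hp : v * toK (quadric (Fin n) ℂ) ^ m = toK p) :
    v ∈ residueKer n ↔ gaussianMean e p = 0 := by
  refine ⟨?_, fun h => ⟨m, e, he, p, hp, h⟩⟩
  rintro ⟨m', e', he', p', hp', hp₀'⟩
  have hpp : quadric (Fin n) ℂ ^ m' * p = quadric (Fin n) ℂ ^ m * p' := toK_injective <| by
    rw [toK_mul, toK_mul, ← hp, ← hp', toK_pow, toK_pow]
    ring
  rw [← gaussianMean_quadric_pow_mul_eq_zero_iff e m', hpp,
    show e + 2 * m' = e' + 2 * m by omega]
  exact (gaussianMean_quadric_pow_mul_eq_zero_iff e' m p').2 hp₀'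

lemma mem_locSub_quadric_of_mem_residueKer {v : KK n} (hv : v ∈ residueKer n) :
    v ∈ locSub {quadric (Fin n) ℂ} := by
  obtain ⟨m, -, -, p, hp, -⟩ := hv
  exact (mem_locSub_singleton quadric_ne_zero).2 ⟨m, p, hp⟩

variable {ℓ e : ℕ}

lemma toK_mul_quadricDelta_mem_residueKer_iff (he : e + n = 2 * ℓ) (a : OO n) :
    toK a * quadricDelta n ℓ ∈ residueKer n ↔ gaussianMean e a = 0 :=
  mem_residueKer_iff he <| by
    rw [quadricDelta, toK_pow, inv_mul_cancel_right₀ (pow_ne_zero ℓ toK_quadric_ne_zero)]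

lemma ExtendsPderiv.apply_mem_residueKer {d : Fin n → Derivation ℂ (KK n) (KK n)}
    (hd : ExtendsPderiv d) (j : Fin n) {v : KK n} (hv : v ∈ locSub {quadric (Fin n) ℂ}) :
    d j v ∈ residueKer n := by
  obtain ⟨k, a, ha⟩ := (mem_locSub_singleton quadric_ne_zero).1 hv
  set G := toK (quadric (Fin n) ℂ)
  have hG : G ≠ 0 := toK_quadric_ne_zero
  obtain ⟨m, e, he, p, hp⟩ : ∃ m e : ℕ, e + n = 2 * m ∧ ∃ p : OO n, v * G ^ m = toK p :=
    ⟨k + n, 2 * k + n, by ring, a * quadric (Fin n) ℂ ^ n, by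
      rw [pow_add, ← mul_assoc, ha, toK_mul, toK_pow]⟩
  have hv : v = toK p * G ^ (-m : ℤ) := by
    rw [← hp, zpow_neg, zpow_natCast, mul_inv_cancel_right₀ (pow_ne_zero m hG)]
  have hdv : d j v * G ^ (m + 1) = toK (quadric (Fin n) ℂ * MvPolynomial.pderiv j p -
      MvPolynomial.C (((2 * m : ℤ) : ℂ)) * (MvPolynomial.X j * p)) := by
    rw [hv, Derivation.leibniz, hd.apply_quadric_zpow, hd, toK_sub, toK_mul, toK_mul, toK_mul,
      toK_C_intCast, zpow_sub₀ hG, zpow_neg, zpow_natCast, smul_eq_mul, smul_eq_mul]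
    push_cast
    field_simp
    ring
  rw [mem_residueKer_iff (by omega : (e + 2) + n = 2 * (m + 1)) hdv, map_sub,
    MvPolynomial.C_mul', map_smul, gaussianMean_quadric_mul, gaussianMean_pderiv, smul_eq_mul,
    ← sub_mul, Fintype.card_fin]
  refine mul_eq_zero_of_left ?_ _
  rw [sub_eq_zero]
  exact_mod_cast (by omega : n + e = 2 * m)

variable (n) in
/-- The largest `𝒪`-submodule contained in `residueKer n`. It is stable under derivatives. -/
def residueCore : Submodule ℂ (KK n) where
  carrier := {v | ∀ q : OO n, toK q * v ∈ residueKer n}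
  zero_mem' q := by
    rw [mul_zero]
    exact zero_mem _
  add_mem' ha hb q := by
    rw [mul_add]
    exact add_mem (ha q) (hb q)
  smul_mem' c v hv q := by
    rw [mul_smul_comm]
    exact Submodule.smul_mem _ c (hv q)

lemma residueCore_le_residueKer : residueCore n ≤ residueKer n := fun v hv => by
  simpa only [toK_one, one_mul] using hv 1

lemma toK_mul_mem_residueCore (a : OO n) {v : KK n} (hv : v ∈ residueCore n) :
    toK a * v ∈ residueCore n := fun q => by
  rw [← mul_assoc, ← toK_mul]
  exact hv _

lemma ExtendsPderiv.apply_mem_residueCore {d : Fin n → Derivation ℂ (KK n) (KK n)}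
    (hd : ExtendsPderiv d) (j : Fin n) {v : KK n} (hv : v ∈ residueCore n) :
    d j v ∈ residueCore n := fun q => by
  have hleibniz : toK q * d j v = d j (toK q * v) - toK (MvPolynomial.pderiv j q) * v := by
    rw [Derivation.leibniz, hd, smul_eq_mul, smul_eq_mul]
    ring
  rw [hleibniz]
  exact sub_mem (hd.apply_mem_residueKer j (mem_locSub_quadric_of_mem_residueKer (hv q))) (hv _)

lemma toK_mul_quadricDelta_mem_residueCore {k : ℕ} {a : OO n} (ha : a.IsHomogeneous k)
    (he : e + n = 2 * ℓ) (hk : e < k) : toK a * quadricDelta n ℓ ∈ residueCore n := fun q => by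
  rw [← mul_assoc, ← toK_mul, toK_mul_quadricDelta_mem_residueKer_iff he]
  exact gaussianMean_mul_eq_zero_of_lt ha hk q

lemma toK_mem_residueCore (q : OO n) : toK q ∈ residueCore n := by
  have hpos : 0 < n := NeZero.pos n
  have hone := toK_mul_quadricDelta_mem_residueCore (isHomogeneous_quadric.pow n)
    (two_mul n).symm (by omega)
  rw [toK_quadric_pow_mul_quadricDelta, sub_self, zpow_zero] at hone
  simpa only [mul_one] using toK_mul_mem_residueCore q hone

lemma toK_X_pow_mul_quadricDelta_notMem_residueKer (he : e + n = 2 * ℓ) (heven : Even e)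
    (z : Fin n) : toK (MvPolynomial.X z ^ e) * quadricDelta n ℓ ∉ residueKer n := by
  rw [toK_mul_quadricDelta_mem_residueKer_iff he, gaussianMean_X_pow]
  exact Nat.cast_ne_zero.2 (gaussianMoment_pos_of_even heven).ne'

end Residue

section Specialization

/-- The specialisation `u(s) f^s ↦ u(r) f^r` at `s = r`. -/
def specializeAt (r : ℕ) (f : OO n) : (KK n)[X] →ₗ[ℂ] KK n where
  toFun u := u.eval (r : KK n) * toK f ^ r
  map_add' u v := by rw [eval_add, add_mul]
  map_smul' c u := by rw [eval_smul, smul_mul_assoc, RingHom.id_apply]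

variable {r : ℕ} {f : OO n}

lemma specializeAt_apply (u : (KK n)[X]) :
    specializeAt r f u = u.eval (r : KK n) * toK f ^ r := rfl

lemma specializeAt_C_mul (a : KK n) (u : (KK n)[X]) :
    specializeAt r f (C a * u) = a * specializeAt r f u := by
  rw [specializeAt_apply, specializeAt_apply, eval_mul, eval_C, mul_assoc]

lemma specializeAt_X_mul (u : (KK n)[X]) :
    specializeAt r f (X * u) = (r : ℂ) • specializeAt r f u := by
  rw [specializeAt_apply, specializeAt_apply, eval_mul, eval_X, mul_assoc, Algebra.smul_def,
    map_natCast]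

lemma specializeAt_bK_mul_C (b : ℂ[X]) (a : KK n) :
    specializeAt r f (bK b * C a) = b.eval (r : ℂ) • (toK (f ^ r) * a) := by
  have hb : (bK b).eval (r : KK n) = algebraMap ℂ (KK n) (b.eval (r : ℂ)) := by
    rw [bK, ← map_natCast ((algebraMap (OO n) (KK n)).comp MvPolynomial.C) r, eval_map,
      eval₂_at_apply]
    exact toK_C _
  rw [specializeAt_apply, eval_mul, eval_C, hb, Algebra.smul_def, toK_pow]
  ring

lemma specializeAt_Dop (hf : f ≠ 0) (D : Derivation ℂ (KK n) (KK n)) (u : (KK n)[X]) :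
    specializeAt r f (Dop D f u) = D (specializeAt r f u) := by
  have hf' := toK_ne_zero hf
  simp only [specializeAt_apply, Dop, LinearMap.add_apply, mulOp, LinearMap.mulLeft_apply,
    Derivation.coeFn_coe, eval_add, eval_mul, eval_X, eval_C,
    eval_coeffDer D (D.map_natCast r), Derivation.leibniz, Derivation.leibniz_pow, smul_eq_mul,
    nsmul_eq_mul]
  cases r with
  | zero => simp
  | succ r =>
    rw [Nat.add_sub_cancel]
    field_simp
    ring

variable {W : Submodule ℂ (KK n)}

lemma specializeAt_mem_of_mem_DSpan (hf : f ≠ 0) {d : Fin n → Derivation ℂ (KK n) (KK n)}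
    (hmul : ∀ (q : OO n), ∀ v ∈ W, toK q * v ∈ W) (hder : ∀ i, ∀ v ∈ W, d i v ∈ W)
    {T : Set (KK n)[X]} (hT : ∀ t ∈ T, specializeAt r f t ∈ W) {y : (KK n)[X]}
    (hy : y ∈ DSpan d f T) : specializeAt r f y ∈ W := by
  suffices hle : DSpan d f T ≤ W.comap (specializeAt r f) from hle hy
  refine Submodule.span_le.2 ?_
  rintro _ ⟨P, hP, t, ht, rfl⟩
  suffices hPW : ∀ u, specializeAt r f u ∈ W → specializeAt r f (P u) ∈ W from hPW t (hT t ht)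
  induction hP using Algebra.adjoin_induction with
  | mem _ hP =>
    intro u hu
    obtain (⟨q, rfl⟩ | rfl) | ⟨i, rfl⟩ := hP
    · exact (specializeAt_C_mul (toK q) u).symm ▸ hmul q _ hu
    · exact (specializeAt_X_mul u).symm ▸ W.smul_mem _ hu
    · exact (specializeAt_Dop hf (d i) u).symm ▸ hder i _ hu
  | algebraMap c =>
    intro u hu
    rw [Module.algebraMap_end_apply, map_smul]
    exact W.smul_mem c hu
  | add _ _ _ _ hP hQ =>
    intro u hu
    rw [LinearMap.add_apply, map_add]
    exact add_mem (hP u hu) (hQ u hu)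
  | mul _ _ _ _ hP hQ => exact fun u hu => hP _ (hQ u hu)

lemma specializeAt_mem_of_mem_polySub (hmul : ∀ (q : OO n), ∀ v ∈ W, toK q * v ∈ W)
    {u : (KK n)[X]} (hu : u ∈ polySub W) : specializeAt r f u ∈ W := by
  rw [specializeAt_apply, eval_eq_sum_range, Finset.sum_mul]
  refine sum_mem fun k _ => ?_
  have hcoeff : u.coeff k * (r : KK n) ^ k * toK f ^ r =
      toK (f ^ r) * ((r : ℂ) ^ k • u.coeff k) := by
    rw [Algebra.smul_def, map_pow, map_natCast, toK_pow]
    ring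
  rw [hcoeff]
  exact hmul _ _ (W.smul_mem _ (hu k))

end Specialization

section Minimality

variable {ℓ r : ℕ} {z : Fin n}

lemma specializeAt_mem_residueCore_of_mem_bPrimeGenerators [NeZero n] (hr : r + n = 2 * ℓ)
    {t : (KK n)[X]} (ht : t ∈ bPrimeGenerators (quadric (Fin n) ℂ ^ ℓ) (MvPolynomial.X z)
      (quadricDelta n ℓ)) :
    specializeAt r (MvPolynomial.X z) t ∈ residueCore n := by
  have hX (i : Fin n) (q : OO n) :
      toK (q * (MvPolynomial.X i * MvPolynomial.X z ^ r)) * quadricDelta n ℓ ∈ residueCore n := by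
    rw [toK_mul, mul_assoc]
    exact toK_mul_mem_residueCore q <| toK_mul_quadricDelta_mem_residueCore
      ((MvPolynomial.isHomogeneous_X ℂ i).mul (MvPolynomial.isHomogeneous_X_pow z r)) hr (by omega)
  have hspec (a : OO n) : specializeAt r (MvPolynomial.X z) (C (toK a * quadricDelta n ℓ)) =
      toK (a * MvPolynomial.X z ^ r) * quadricDelta n ℓ := by
    rw [specializeAt_apply, eval_C, toK_mul, toK_pow]
    ring
  obtain ⟨cols, -, rfl⟩ | rfl := ht
  · rw [hspec, minorHF_fin_one, pderiv_quadric_pow, pderiv_quadric_pow]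
    convert sub_mem (hX (cols 0) (MvPolynomial.C (2 * ℓ : ℂ) * quadric (Fin n) ℂ ^ (ℓ - 1) *
        MvPolynomial.pderiv (cols 1) (MvPolynomial.X z)))
      (hX (cols 1) (MvPolynomial.C (2 * ℓ : ℂ) * quadric (Fin n) ℂ ^ (ℓ - 1) *
        MvPolynomial.pderiv (cols 0) (MvPolynomial.X z))) using 1
    rw [← sub_mul, ← toK_sub]
    congr 2
    ring
  · simpa only [hspec, one_mul] using hX z 1

theorem IsBPrimeMultiple.eval_eq_zero {d : Fin n → Derivation ℂ (KK n) (KK n)}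
    (hd : ExtendsPderiv d) (hn : Even n) (hr : r + n = 2 * ℓ) {b : ℂ[X]}
    (hb : IsBPrimeMultiple d (quadric (Fin n) ℂ ^ ℓ) (MvPolynomial.X z) (quadricDelta n ℓ) b) :
    b.eval (r : ℂ) = 0 := by
  have : NeZero n := ⟨z.pos.ne'⟩
  have : Nontrivial (Fin n) := Fin.nontrivial_iff_two_le.2 (by
    obtain ⟨k, rfl⟩ := hn
    have := z.pos
    omega)
  have hX : (MvPolynomial.X z : OO n) ≠ 0 := MvPolynomial.X_ne_zero z
  obtain ⟨y, hy, w, hw, hyw⟩ := Submodule.mem_sup.1 hb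
  have hsum : specializeAt r (MvPolynomial.X z) y + specializeAt r (MvPolynomial.X z) w =
      b.eval (r : ℂ) • (toK (MvPolynomial.X z ^ r) * quadricDelta n ℓ) := by
    rw [← map_add, hyw, specializeAt_bK_mul_C]
  have hy' : specializeAt r (MvPolynomial.X z) y ∈ residueKer n :=
    residueCore_le_residueKer <| specializeAt_mem_of_mem_DSpan hX
      (fun q _ => toK_mul_mem_residueCore q) (fun i _ => hd.apply_mem_residueCore i)
      (fun _ => specializeAt_mem_residueCore_of_mem_bPrimeGenerators hr) hy
  have hwX : specializeAt r (MvPolynomial.X z) w ∈ locSub {MvPolynomial.X z} :=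
    specializeAt_mem_of_mem_polySub (fun q _ => toK_mul_mem_locSub_singleton hX q) hw
  have hδ : toK (MvPolynomial.X z ^ r) * quadricDelta n ℓ ∈ locSub {quadric (Fin n) ℂ} :=
    Submodule.subset_span ⟨MvPolynomial.X z ^ r, _, rfl, ℓ, by
      rw [quadricDelta, toK_pow _ ℓ, inv_pow]⟩
  have hwg : specializeAt r (MvPolynomial.X z) w ∈ locSub {quadric (Fin n) ℂ} := by
    rw [eq_sub_of_add_eq' hsum]
    exact sub_mem (Submodule.smul_mem _ _ hδ) (mem_locSub_quadric_of_mem_residueKer hy')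
  obtain ⟨q, hq⟩ := exists_toK_eq_of_mem_locSub MvPolynomial.X_prime (not_X_dvd_quadric z) hwX hwg
  by_contra h
  refine toK_X_pow_mul_quadricDelta_notMem_residueKer hr ?_ z
    ((Submodule.smul_mem_iff _ h).1 (hsum ▸ add_mem hy' (hq ▸ residueCore_le_residueKer
      (toK_mem_residueCore q))))
  exact (Nat.even_add.1 (hr ▸ even_two_mul ℓ)).2 hn

end Minimality

theorem quadric_power_computation_general (n ℓ : ℕ) (hℓ : 1 ≤ ℓ) (z : Fin n)
    (d : Fin n → Derivation ℂ (KK n) (KK n)) (hd : ExtendsPderiv d) :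
    ((X + C (toK (MvPolynomial.C ((n : ℂ) - 2 * (ℓ : ℂ))))) * C (quadricDelta n ℓ) =
      ∑ i, Dop (d i) (MvPolynomial.X z)
        (mulOp (C (toK (MvPolynomial.X i))) (C (quadricDelta n ℓ)))) ∧
    (∀ i ≠ z, ∀ j : ℕ, 1 ≤ j →
      Dop (d i) (MvPolynomial.X z)
          (C (toK (MvPolynomial.C (2 * ((j : ℂ) - (ℓ : ℂ))) *
              (quadric (Fin n) ℂ ^ (j - 1) * MvPolynomial.X z ^ 2)) * quadricDelta n ℓ) +
            ∑ k ∈ Finset.univ.erase z, Dop (d k) (MvPolynomial.X z)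
              (C (toK (MvPolynomial.X k * quadric (Fin n) ℂ ^ j) * quadricDelta n ℓ))) =
        C (toK (MvPolynomial.C
              (2 * ((j : ℂ) - (ℓ : ℂ)) * ((n : ℂ) + 2 * ((j : ℂ) - (ℓ : ℂ)) - 1)) *
            (MvPolynomial.X i * quadric (Fin n) ℂ ^ (j - 1))) * quadricDelta n ℓ)) ∧
    (Even n ∨ 2 * ℓ ≤ n →
      IsBPrimeMultiple d (quadric (Fin n) ℂ ^ ℓ) (MvPolynomial.X z) (quadricDelta n ℓ)
        (X + C ((n : ℂ) - 2 * (ℓ : ℂ)))) ∧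
    (Even n → n ≤ 2 * ℓ → ∀ c,
      IsBPrimeMultiple d (quadric (Fin n) ℂ ^ ℓ) (MvPolynomial.X z) (quadricDelta n ℓ) c →
        (X + C ((n : ℂ) - 2 * (ℓ : ℂ))) ∣ c) := by
  refine ⟨X_add_C_mul_quadricDelta hd z, fun i hi j hj => ?_,
    fun hnℓ => isBPrimeMultiple_quadric_pow hd hℓ hnℓ z, fun hn hnℓ c hc => ?_⟩
  · obtain ⟨j, rfl⟩ := Nat.exists_eq_add_of_le' hj
    exact Dop_quadric_pow_mul_quadricDelta hd hi j
  · have hroot := dvd_iff_isRoot.2 (hc.eval_eq_zero hd hn (Nat.sub_add_cancel hnℓ))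
    rwa [sub_eq_add_neg, ← C_neg, Nat.cast_sub hnℓ, neg_sub, Nat.cast_mul, Nat.cast_ofNat] at hroot

/-- for `n` even, `g = x₁²+⋯+xₙ²`, `h = g^ℓ` (`ℓ ≥ 1`), `f = x₁`:
the identities `(s+n−2ℓ) δ_h x₁^s = (Σᵢ ∂ᵢ·xᵢ)·δ_h x₁^s` and, for `2 ≤ i ≤ n`, `j ≥ 1`,
`∂ᵢ[2(j−ℓ)g^(j−1)x₁² + Σ_{k≥2} ∂_k·x_k g^j]·δ_h x₁^s = 2(j−ℓ)(n+2(j−ℓ)−1)xᵢg^(j−1)δ_h x₁^s`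
hold; consequently for `ℓ ≥ n/2`, `b'_{x₁}(h,s) = s + n − 2ℓ`. -/
theorem quadric_power_computation (n ℓ : ℕ) (hn : 1 ≤ n) (hneven : Even n) (hℓ : 1 ≤ ℓ)
    (d : Fin n → Derivation ℂ (KK n) (KK n)) (hd : ExtendsPderiv d)
    (g : OO n) (hg : g = ∑ i : Fin n, MvPolynomial.X i ^ 2)
    (h : Fin 1 → OO n) (hh : h = fun _ => g ^ ℓ)
    (f : OO n) (hf : f = MvPolynomial.X (⟨0, by omega⟩ : Fin n))
    (delta : KK n) (hdelta : delta = (toK (g ^ ℓ))⁻¹)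
    (V : Submodule ℂ (KK n)) (hV : V = locSub {f})
    (memB' : Polynomial ℂ → Prop)
    (hmemB' : ∀ b : Polynomial ℂ, memB' b ↔
      bK b * Polynomial.C delta ∈
        DSpan d f ({y | ∃ cols : Fin 2 → Fin n, StrictMono cols ∧
            y = Polynomial.C (toK (minorHF h f cols) * delta)} ∪
          {Polynomial.C (toK f * delta)}) ⊔ polySub V) :
    -- first identity: `(s + n − 2ℓ) δ_h x₁^s = (Σᵢ ∂ᵢ·xᵢ)·δ_h x₁^s`
    ((Polynomial.X + Polynomial.C (toK (MvPolynomial.C ((n : ℂ) - 2 * (ℓ : ℂ)))))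
        * Polynomial.C delta
      = ∑ i : Fin n,
          (Dop (d i) f) ((mulOp (Polynomial.C (toK (MvPolynomial.X i))))
            (Polynomial.C delta))) ∧
    -- second identity, for `i ≠ 1` (0-based: `i ≠ 0`) and `j ≥ 1`
    (∀ (i : Fin n), i ≠ ⟨0, by omega⟩ → ∀ j : ℕ, 1 ≤ j →
      (Dop (d i) f)
          (Polynomial.C (toK (MvPolynomial.C (2 * ((j : ℂ) - (ℓ : ℂ)))
              * (g ^ (j - 1) * MvPolynomial.X (⟨0, by omega⟩ : Fin n) ^ 2)) * delta)
            + ∑ k ∈ Finset.univ.erase (⟨0, by omega⟩ : Fin n),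
                (Dop (d k) f) (Polynomial.C (toK (MvPolynomial.X k * g ^ j) * delta)))
        = Polynomial.C (toK (MvPolynomial.C
              (2 * ((j : ℂ) - (ℓ : ℂ)) * ((n : ℂ) + 2 * ((j : ℂ) - (ℓ : ℂ)) - 1))
              * (MvPolynomial.X i * g ^ (j - 1))) * delta)) ∧
    -- consequently, for `ℓ ≥ n/2`, `b'_{x₁}(h,s) = s + n − 2ℓ`
    (n ≤ 2 * ℓ →
      (Polynomial.X + Polynomial.C ((n : ℂ) - 2 * (ℓ : ℂ))).Monic ∧
      memB' (Polynomial.X + Polynomial.C ((n : ℂ) - 2 * (ℓ : ℂ))) ∧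
      ∀ c : Polynomial ℂ, memB' c →
        (Polynomial.X + Polynomial.C ((n : ℂ) - 2 * (ℓ : ℂ))) ∣ c) := by
  subst hV hdelta hf hh hg
  obtain ⟨hfirst, hsecond, hmem, hdvd⟩ := quadric_power_computation_general n ℓ hℓ ⟨0, hn⟩ d hd
  exact ⟨hfirst, hsecond, fun hle => ⟨monic_X_add_C _, (hmemB' _).2 (hmem (Or.inl hneven)),
    fun c hc => hdvd hneven hle c ((hmemB' c).1 hc)⟩⟩
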